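/- Let M, N, L be log-convex weight sequences. (i) If there exist c₁, c₂, d > 0 such that for all f ∈ H^∞_{v_{M,c₁}}(ℂ) and all g ∈ H^∞_{v_{N,c₂}}(ℂ) the pointwise product f·g belongs to H^∞_{v_{L,d}}(ℂ), then L ≼ M⋆N, i.e. sup_{j≥1} (L_j/(M⋆N)_j)^{1/j} < ∞. (ii) If this hypothesis holds with M = N = L, then M has moderate growth (mg). -/

import Mathlib

open Filter Set

/-- The associated weight function `ω_M(t) = sup_j log(t^j / M_j)` for `t ≠ 0`, `ω_M(0) = 0`. -/
noncomputable def omegaM (M : ℕ → ℝ) (t : ℝ) : ℝ :=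
  if t = 0 then 0 else ⨆ j : ℕ, Real.log (t ^ j / M j)

/-- `v_M(t) = exp(-ω_M(t))`. -/
noncomputable def vM (M : ℕ → ℝ) (t : ℝ) : ℝ :=
  Real.exp (-(omegaM M t))

/-- `v_{M,c}(t) = exp(-ω_M(c·t))`. -/
noncomputable def vMc (M : ℕ → ℝ) (c t : ℝ) : ℝ :=
  Real.exp (-(omegaM M (c * t)))

/-- `v_M^c(t) = exp(-c·ω_M(t))`. -/
noncomputable def vMpow (M : ℕ → ℝ) (c t : ℝ) : ℝ :=
  Real.exp (-(c * omegaM M t))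

/-- A weight sequence: positive, `M_0 = 1`, `(M_j)^{1/j} → ∞`. -/
def WeightSeq (M : ℕ → ℝ) : Prop :=
  (∀ j, 0 < M j) ∧ M 0 = 1 ∧
    Tendsto (fun j : ℕ => (M j) ^ (1 / (j : ℝ))) atTop atTop

/-- Log-convexity: `M_j² ≤ M_{j-1}·M_{j+1}` for `j ≥ 1`. -/
def LogConvexSeq (M : ℕ → ℝ) : Prop :=
  ∀ j : ℕ, 1 ≤ j → (M j) ^ 2 ≤ M (j - 1) * M (j + 1)

/-- The class `LC`: normalized log-convex weight sequences. -/
def LCset (M : ℕ → ℝ) : Prop :=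
  WeightSeq M ∧ LogConvexSeq M ∧ 1 ≤ M 1

/-- Weighted space of entire functions with `sup |f(z)|·v(|z|) < ∞`. -/
def Hinf (v : ℝ → ℝ) : Set (ℂ → ℂ) :=
  {f | Differentiable ℂ f ∧
    ∃ C : ℝ, ∀ z : ℂ, ‖f z‖ * v ‖z‖ ≤ C}

/-- The weighted sup-norm `‖f‖_v`. -/
noncomputable def wnorm (v : ℝ → ℝ) (f : ℂ → ℂ) : ℝ :=
  ⨆ z : ℂ, ‖f z‖ * v ‖z‖

/-- A weight: strictly positive, continuous, non-increasing and rapidly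
decreasing on `[0,∞)`. -/
def IsWeight (v : ℝ → ℝ) : Prop :=
  (∀ t : ℝ, 0 ≤ t → 0 < v t) ∧ ContinuousOn v (Set.Ici 0) ∧
    AntitoneOn v (Set.Ici 0) ∧
    ∀ k : ℕ, Tendsto (fun t : ℝ => t ^ k * v t) atTop (nhds 0)

/-- A normalized weight: `v ≡ 1` on `[0,1]`. -/
def NormalizedWeight (v : ℝ → ℝ) : Prop :=
  ∀ t : ℝ, 0 ≤ t → t ≤ 1 → v t = 1

/-- A (log-)convex weight: `t ↦ -log v(eᵗ)` is convex on `ℝ`. -/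
def ConvexWeight (v : ℝ → ℝ) : Prop :=
  ConvexOn ℝ Set.univ fun t : ℝ => -Real.log (v (Real.exp t))

/-- Moderate growth for a weight: `v(H·t) ≤ e^H · v(t)²`. -/
def ModerateGrowthW (v : ℝ → ℝ) : Prop :=
  ∃ H : ℝ, 1 ≤ H ∧ ∀ t : ℝ, 0 ≤ t → v (H * t) ≤ Real.exp H * (v t) ^ 2

/-- Moderate growth (mg) for a sequence: `M_{j+k} ≤ C^{j+k}·M_j·M_k`. -/
def MGseq (M : ℕ → ℝ) : Prop :=
  ∃ C : ℝ, 1 ≤ C ∧ ∀ j k : ℕ, M (j + k) ≤ C ^ (j + k) * M j * M k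

/-- The associated weight sequence `M^v_j = sup_{t>0} t^j·v(t)`. -/
noncomputable def assocSeq (v : ℝ → ℝ) (j : ℕ) : ℝ :=
  ⨆ t : Set.Ioi (0 : ℝ), (t : ℝ) ^ j * v t

/-- The unit ball `B_{1/v}(ℂ)` of entire functions bounded by `1/v`. -/
def BClass (v : ℝ → ℝ) : Set (ℂ → ℂ) :=
  {f | Differentiable ℂ f ∧ ∀ z : ℂ, ‖f z‖ ≤ 1 / v ‖z‖}

/-- The associated growth condition `w̃_v(z) = sup{|f(z)| : f ∈ B_{1/v}}`. -/
noncomputable def wTilde (v : ℝ → ℝ) (z : ℂ) : ℝ :=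
  sSup {x : ℝ | ∃ f ∈ BClass v, x = ‖f z‖}

/-- The associated weight `ṽ = 1/w̃_v`, as a function of `t = |z|`. -/
noncomputable def vTilde (v : ℝ → ℝ) (t : ℝ) : ℝ :=
  1 / wTilde v (t : ℂ)

/-- An essential weight: `v ∼ ṽ`. -/
def Essential (v : ℝ → ℝ) : Prop :=
  ∃ C : ℝ, 1 ≤ C ∧ ∀ t : ℝ, 0 ≤ t →
    v t ≤ C * vTilde v t ∧ vTilde v t ≤ C * v t

/-- `P_v(t) = sup_j t^j/‖z^j‖_v`. -/
noncomputable def Pfun (v : ℝ → ℝ) (t : ℝ) : ℝ :=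
  ⨆ j : ℕ, t ^ j / wnorm v fun z : ℂ => z ^ j

/-- The convolved sequence `(M⋆N)_j = min_{0≤k≤j} M_k·N_{j-k}`. -/
noncomputable def convSeq (M N : ℕ → ℝ) (j : ℕ) : ℝ :=
  (Finset.range (j + 1)).inf' Finset.nonempty_range_add_one fun k => M k * N (j - k)

/-!
For a weight sequence `M`, the entire function `F(z) = ∑ z^j / M_j` has nonnegative Taylor
coefficients and satisfies `|F(z)| ≤ 2 exp(ω_M(2|z|))`, so `F(c₁z/2)` lies in `H^∞_{v_{M,c₁}}`;
let `G` be the analogous function for `N`. If their product is controlled by `exp(ω_L(d·))`, then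
on the positive axis so is each single product of terms
`(c₁t/2)^k / M_k · (c₂t/2)^l / N_l`. Log-convexity of `L` means that `t^j / L_j` is the largest of
all `t^i / L_i` at `t = L_{j+1} / L_j`, where therefore `exp(ω_L(t)) = t^j / L_j`. Evaluating at
this point with `j = k + l` gives `L_{k+l} ≤ S^{k+l} M_k N_l`, from which both claims are read off.
-/

section LogConvex

variable {M : ℕ → ℝ} {t : ℝ}

lemma exp_omegaM_eq_of_forall_le (hpos : ∀ j, 0 < M j) (ht : 0 < t) {j : ℕ}
    (hj : ∀ i, t ^ i / M i ≤ t ^ j / M j) : Real.exp (omegaM M t) = t ^ j / M j := by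
  have hterm (i : ℕ) : 0 < t ^ i / M i := div_pos (pow_pos ht i) (hpos i)
  have hmax : IsGreatest (range fun i : ℕ => Real.log (t ^ i / M i)) (Real.log (t ^ j / M j)) :=
    ⟨mem_range_self j, forall_mem_range.2 fun i => Real.log_le_log (hterm i) (hj i)⟩
  rw [omegaM, if_neg ht.ne', iSup, hmax.csSup_eq, Real.exp_log (hterm j)]

lemma pow_div_le_pow_succ_div_iff (hpos : ∀ j, 0 < M j) (ht : 0 < t) (i : ℕ) :
    t ^ i / M i ≤ t ^ (i + 1) / M (i + 1) ↔ M (i + 1) / M i ≤ t := by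
  rw [div_le_div_iff₀ (hpos i) (hpos (i + 1)), div_le_iff₀ (hpos i), pow_succ, mul_assoc,
    mul_le_mul_iff_right₀ (pow_pos ht i)]

lemma pow_succ_div_le_pow_div_iff (hpos : ∀ j, 0 < M j) (ht : 0 < t) (i : ℕ) :
    t ^ (i + 1) / M (i + 1) ≤ t ^ i / M i ↔ t ≤ M (i + 1) / M i := by
  rw [div_le_div_iff₀ (hpos (i + 1)) (hpos i), le_div_iff₀ (hpos i), pow_succ, mul_assoc,
    mul_le_mul_iff_right₀ (pow_pos ht i)]

namespace LogConvexSeq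

lemma monotone_succ_div (hM : LogConvexSeq M) (hpos : ∀ j, 0 < M j) :
    Monotone fun j => M (j + 1) / M j := by
  refine monotone_nat_of_le_succ fun j => ?_
  rw [div_le_div_iff₀ (hpos j) (hpos (j + 1)), ← sq, mul_comm]
  exact hM (j + 1) (Nat.succ_pos j)

lemma pow_div_le_pow_div_of_eq_succ_div (hM : LogConvexSeq M) (hpos : ∀ j, 0 < M j) {j : ℕ}
    (ht : t = M (j + 1) / M j) (i : ℕ) : t ^ i / M i ≤ t ^ j / M j := by
  have hmono := hM.monotone_succ_div hpos
  have htpos : 0 < t := ht ▸ div_pos (hpos (j + 1)) (hpos j)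
  have hIic : MonotoneOn (fun i => t ^ i / M i) (Iic j) :=
    monotoneOn_of_le_add_one ordConnected_Iic fun i _ hi _ =>
      (pow_div_le_pow_succ_div_iff hpos htpos i).2 (ht ▸ hmono hi)
  have hIci : AntitoneOn (fun i => t ^ i / M i) (Ici j) :=
    antitoneOn_nat_Ici_of_succ_le fun i hi =>
      (pow_succ_div_le_pow_div_iff hpos htpos i).2 (ht ▸ hmono hi)
  rcases le_total i j with hij | hji
  · exact hIic hij self_mem_Iic hij
  · exact hIci self_mem_Ici hji hji

lemma exists_exp_omegaM_eq (hM : LogConvexSeq M) (hpos : ∀ j, 0 < M j) (j : ℕ) :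
    ∃ t, 0 < t ∧ Real.exp (omegaM M t) = t ^ j / M j :=
  have ht : 0 < M (j + 1) / M j := div_pos (hpos (j + 1)) (hpos j)
  ⟨_, ht, exp_omegaM_eq_of_forall_le hpos ht (hM.pow_div_le_pow_div_of_eq_succ_div hpos rfl)⟩

lemma le_mul_pow_mul_of_pow_div_le (hM : LogConvexSeq M) (hpos : ∀ j, 0 < M j) {d P C : ℝ}
    (hd : 0 < d) (hP : 0 < P) {j : ℕ}
    (h : ∀ t, 0 < t → t ^ j / P ≤ C * Real.exp (omegaM M (d * t))) : M j ≤ C * d ^ j * P := by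
  obtain ⟨s, hs, hpeak⟩ := hM.exists_exp_omegaM_eq hpos j
  have hj := h (s / d) (div_pos hs hd)
  rw [mul_div_cancel₀ s hd.ne', hpeak, div_pow, div_div, ← mul_div_assoc,
    div_le_div_iff₀ (by positivity) (hpos j)] at hj
  refine le_of_mul_le_mul_left ?_ (pow_pos hs j)
  calc s ^ j * M j ≤ C * s ^ j * (d ^ j * P) := hj
    _ = s ^ j * (C * d ^ j * P) := by ring

end LogConvexSeq

end LogConvex

section PowerSeries

/-- The entire function `z ↦ ∑ z^j / M_j` attached to a weight sequence `M`: up to a dilation, an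
element of `H^∞_{v_{M,c}}` that dominates every monomial `t^j / M_j` on the positive axis. -/
noncomputable def weightSeries (M : ℕ → ℝ) (z : ℂ) : ℂ :=
  ∑' j : ℕ, z ^ j / (M j : ℂ)

lemma mul_vMc_le_iff {M : ℕ → ℝ} {a c t C : ℝ} :
    a * vMc M c t ≤ C ↔ a ≤ C * Real.exp (omegaM M (c * t)) := by
  rw [vMc, Real.exp_neg, ← div_eq_mul_inv, div_le_iff₀ (Real.exp_pos _)]

namespace WeightSeq

variable {M : ℕ → ℝ} {t : ℝ}

lemma bddAbove_range_log_pow_div (hM : WeightSeq M) (ht : 0 < t) :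
    BddAbove (range fun j : ℕ => Real.log (t ^ j / M j)) := by
  obtain ⟨hpos, -, hlim⟩ := hM
  refine IsBoundedUnder.bddAbove_range (isBoundedUnder_of_eventually_le (a := 0) ?_)
  filter_upwards [hlim.eventually_ge_atTop t, eventually_ge_atTop 1] with j hroot hj
  have hpow : t ^ j ≤ M j := calc
    t ^ j ≤ (M j ^ (1 / (j : ℝ))) ^ j := pow_le_pow_left₀ ht.le hroot j
    _ = M j := by rw [one_div, Real.rpow_inv_natCast_pow (hpos j).le (by lia)]
  exact Real.log_nonpos (div_pos (pow_pos ht j) (hpos j)).le ((div_le_one (hpos j)).2 hpow)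

lemma pow_div_le_exp_omegaM (hM : WeightSeq M) (ht : 0 ≤ t) (j : ℕ) :
    t ^ j / M j ≤ Real.exp (omegaM M t) := by
  rcases ht.eq_or_lt with rfl | ht
  · cases j <;> simp [omegaM, hM.2.1]
  · rw [← Real.log_le_iff_le_exp (div_pos (pow_pos ht j) (hM.1 j)), omegaM, if_neg ht.ne']
    exact le_ciSup (hM.bddAbove_range_log_pow_div ht) j

lemma pow_div_le_half_pow_mul_exp_omegaM (hM : WeightSeq M) (ht : 0 ≤ t) (j : ℕ) :
    t ^ j / M j ≤ (1 / 2) ^ j * Real.exp (omegaM M (2 * t)) :=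
  calc t ^ j / M j = (1 / 2) ^ j * ((2 * t) ^ j / M j) := by
        rw [← mul_div_assoc, ← mul_pow]; ring_nf
    _ ≤ (1 / 2) ^ j * Real.exp (omegaM M (2 * t)) := by
        gcongr
        exact hM.pow_div_le_exp_omegaM (by positivity) j

lemma pow_div_nonneg (hM : WeightSeq M) (ht : 0 ≤ t) (j : ℕ) : 0 ≤ t ^ j / M j :=
  div_nonneg (pow_nonneg ht j) (hM.1 j).le

lemma summable_pow_div (hM : WeightSeq M) (ht : 0 ≤ t) : Summable fun j : ℕ => t ^ j / M j :=
  .of_nonneg_of_le (hM.pow_div_nonneg ht) (hM.pow_div_le_half_pow_mul_exp_omegaM ht)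
    (summable_geometric_two.mul_right _)

lemma norm_pow_div (hM : WeightSeq M) (z : ℂ) (j : ℕ) : ‖z ^ j / (M j : ℂ)‖ = ‖z‖ ^ j / M j := by
  rw [norm_div, norm_pow, Complex.norm_of_nonneg (hM.1 j).le]

lemma differentiable_weightSeries (hM : WeightSeq M) : Differentiable ℂ (weightSeries M) := by
  intro z
  have hball : DifferentiableOn ℂ (weightSeries M) (Metric.ball 0 (‖z‖ + 1)) := by
    refine Complex.differentiableOn_tsum_of_summable_norm
      (hM.summable_pow_div (by positivity : 0 ≤ ‖z‖ + 1)) (fun j => by fun_prop)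
      Metric.isOpen_ball fun j w hw => ?_
    rw [hM.norm_pow_div]
    have hMj := hM.1 j
    gcongr
    exact (mem_ball_zero_iff.1 hw).le
  exact hball.differentiableAt (Metric.isOpen_ball.mem_nhds (by simp))

lemma norm_weightSeries_le (hM : WeightSeq M) (z : ℂ) :
    ‖weightSeries M z‖ ≤ 2 * Real.exp (omegaM M (2 * ‖z‖)) :=
  tsum_of_norm_bounded (hasSum_geometric_two.mul_right _) fun j =>
    (hM.norm_pow_div z j).trans_le (hM.pow_div_le_half_pow_mul_exp_omegaM (norm_nonneg z) j)

lemma weightSeries_comp_mul_mem_Hinf (hM : WeightSeq M) {c : ℝ} (hc : 0 ≤ c) :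
    (fun z : ℂ => weightSeries M ((c / 2 : ℝ) * z)) ∈ Hinf (vMc M c) := by
  refine ⟨hM.differentiable_weightSeries.comp (differentiable_id.const_mul _), 2, fun z => ?_⟩
  have hnorm : 2 * ‖((c / 2 : ℝ) : ℂ) * z‖ = c * ‖z‖ := by
    rw [norm_mul, Complex.norm_of_nonneg (by positivity)]
    ring
  rw [mul_vMc_le_iff, ← hnorm]
  exact hM.norm_weightSeries_le _

lemma pow_div_le_norm_weightSeries (hM : WeightSeq M) (ht : 0 ≤ t) (k : ℕ) :
    t ^ k / M k ≤ ‖weightSeries M t‖ := by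
  have hreal : weightSeries M t = ((∑' j : ℕ, t ^ j / M j : ℝ) : ℂ) := by
    simp only [weightSeries, Complex.ofReal_tsum, Complex.ofReal_div, Complex.ofReal_pow]
  rw [hreal, Complex.norm_of_nonneg (tsum_nonneg (hM.pow_div_nonneg ht))]
  exact (hM.summable_pow_div ht).le_tsum k fun j _ => hM.pow_div_nonneg ht j

end WeightSeq

end PowerSeries

section Convolution

variable {M N L : ℕ → ℝ}

lemma exists_forall_pow_div_mul_pow_div_le (hM : WeightSeq M) (hN : WeightSeq N) {c₁ c₂ d : ℝ}
    (hc₁ : 0 ≤ c₁) (hc₂ : 0 ≤ c₂)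
    (hmul : ∀ f g : ℂ → ℂ, f ∈ Hinf (vMc M c₁) → g ∈ Hinf (vMc N c₂) →
      (fun z : ℂ => f z * g z) ∈ Hinf (vMc L d)) :
    ∃ C : ℝ, ∀ (k l : ℕ) (t : ℝ), 0 ≤ t →
      (c₁ / 2 * t) ^ k / M k * ((c₂ / 2 * t) ^ l / N l) ≤ C * Real.exp (omegaM L (d * t)) := by
  obtain ⟨-, C, hC⟩ := hmul _ _ (hM.weightSeries_comp_mul_mem_Hinf hc₁)
    (hN.weightSeries_comp_mul_mem_Hinf hc₂)
  refine ⟨C, fun k l t ht => ?_⟩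
  have hprod := mul_vMc_le_iff.1 (hC t)
  rw [Complex.norm_of_nonneg ht, norm_mul, ← Complex.ofReal_mul, ← Complex.ofReal_mul] at hprod
  refine le_trans ?_ hprod
  gcongr
  · exact hN.pow_div_nonneg (by positivity) l
  · exact hM.pow_div_le_norm_weightSeries (by positivity) k
  · exact hN.pow_div_le_norm_weightSeries (by positivity) l

lemma exists_forall_le_mul_pow_mul_pow_mul (hM : WeightSeq M) (hN : WeightSeq N)
    (hLpos : ∀ j, 0 < L j) (hL : LogConvexSeq L) {c₁ c₂ d : ℝ}
    (hc₁ : 0 < c₁) (hc₂ : 0 < c₂) (hd : 0 < d)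
    (hmul : ∀ f g : ℂ → ℂ, f ∈ Hinf (vMc M c₁) → g ∈ Hinf (vMc N c₂) →
      (fun z : ℂ => f z * g z) ∈ Hinf (vMc L d)) :
    ∃ C : ℝ, ∀ k l : ℕ,
      L (k + l) ≤ C * ((2 * d / c₁) ^ k * (2 * d / c₂) ^ l) * (M k * N l) := by
  obtain ⟨C, hC⟩ := exists_forall_pow_div_mul_pow_div_le hM hN hc₁.le hc₂.le hmul
  refine ⟨C, fun k l => ?_⟩
  have hMk := hM.1 k
  have hNl := hN.1 l
  have hLkl : L (k + l) ≤ C * d ^ (k + l) * ((2 / c₁) ^ k * (2 / c₂) ^ l * (M k * N l)) := by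
    refine hL.le_mul_pow_mul_of_pow_div_le hLpos hd (by positivity) fun t ht => ?_
    convert hC k l t ht.le using 1
    simp only [div_pow, mul_pow, pow_add]
    field_simp
  refine hLkl.trans_eq ?_
  rw [mul_comm 2 d, mul_div_assoc, mul_div_assoc, mul_pow, mul_pow, pow_add]
  ring

lemma exists_one_le_forall_le_pow_mul (hM : WeightSeq M) (hN : WeightSeq N) (hL0 : L 0 = 1)
    {A B C : ℝ} (hA : 0 ≤ A) (hB : 0 ≤ B)
    (h : ∀ k l : ℕ, L (k + l) ≤ C * (A ^ k * B ^ l) * (M k * N l)) :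
    ∃ S : ℝ, 1 ≤ S ∧ ∀ k l : ℕ, L (k + l) ≤ S ^ (k + l) * M k * N l := by
  set C' := max 1 C
  set R := max 1 (max A B)
  have hC' : 1 ≤ C' := le_max_left _ _
  have hR : 1 ≤ R := le_max_left _ _
  have hAR : A ≤ R := (le_max_left A B).trans (le_max_right _ _)
  have hBR : B ≤ R := (le_max_right A B).trans (le_max_right _ _)
  refine ⟨C' * R, one_le_mul_of_one_le_of_one_le hC' hR, fun k l => ?_⟩
  have hMk := hM.1 k
  have hNl := hN.1 l
  rcases eq_or_ne (k + l) 0 with hkl | hkl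
  · obtain ⟨rfl, rfl⟩ := Nat.add_eq_zero_iff.1 hkl
    simp [hM.2.1, hN.2.1, hL0]
  calc L (k + l) ≤ C * (A ^ k * B ^ l) * (M k * N l) := h k l
    _ ≤ C' ^ (k + l) * (R ^ k * R ^ l) * (M k * N l) := by
        gcongr
        exact (le_max_right 1 C).trans (le_self_pow₀ hC' hkl)
    _ = (C' * R) ^ (k + l) * M k * N l := by rw [← pow_add, ← mul_pow, mul_assoc]

lemma exists_add_eq_convSeq_eq (M N : ℕ → ℝ) (j : ℕ) :
    ∃ k l, k + l = j ∧ convSeq M N j = M k * N l := by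
  obtain ⟨k, hk, hmin⟩ := Finset.exists_mem_eq_inf' (s := Finset.range (j + 1))
    Finset.nonempty_range_add_one fun k => M k * N (j - k)
  exact ⟨k, j - k, Nat.add_sub_of_le (Finset.mem_range_succ_iff.1 hk), hmin⟩

lemma div_convSeq_rpow_le (hMpos : ∀ j, 0 < M j) (hNpos : ∀ j, 0 < N j) (hLpos : ∀ j, 0 < L j)
    {S : ℝ} (hS : 0 ≤ S) (h : ∀ k l : ℕ, L (k + l) ≤ S ^ (k + l) * M k * N l) {j : ℕ}
    (hj : j ≠ 0) : (L j / convSeq M N j) ^ (1 / (j : ℝ)) ≤ S := by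
  obtain ⟨k, l, rfl, hconv⟩ := exists_add_eq_convSeq_eq M N j
  have hMN : 0 < M k * N l := mul_pos (hMpos k) (hNpos l)
  have hdiv : L (k + l) / convSeq M N (k + l) ≤ S ^ (k + l) := by
    rw [hconv, div_le_iff₀ hMN, ← mul_assoc]
    exact h k l
  have hnonneg : 0 ≤ L (k + l) / convSeq M N (k + l) :=
    hconv ▸ (div_pos (hLpos (k + l)) hMN).le
  calc (L (k + l) / convSeq M N (k + l)) ^ (1 / ((k + l : ℕ) : ℝ))
      ≤ (S ^ (k + l)) ^ (1 / ((k + l : ℕ) : ℝ)) := by gcongr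
    _ = S := by rw [one_div, Real.pow_rpow_inv_natCast hS hj]

end Convolution

theorem stmt18_general {M N L : ℕ → ℝ} (hM : WeightSeq M) (hN : WeightSeq N)
    (hL : WeightSeq L) (hLlc : LogConvexSeq L)
    (hmul : ∃ c₁ : ℝ, 0 < c₁ ∧ ∃ c₂ : ℝ, 0 < c₂ ∧ ∃ d : ℝ, 0 < d ∧
      ∀ f g : ℂ → ℂ, f ∈ Hinf (vMc M c₁) → g ∈ Hinf (vMc N c₂) →
        (fun z : ℂ => f z * g z) ∈ Hinf (vMc L d)) :
    (∃ S : ℝ, ∀ j : ℕ, 1 ≤ j → (L j / convSeq M N j) ^ (1 / (j : ℝ)) ≤ S) ∧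
      ∃ C : ℝ, 1 ≤ C ∧ ∀ j k : ℕ, L (j + k) ≤ C ^ (j + k) * M j * N k := by
  obtain ⟨c₁, hc₁, c₂, hc₂, d, hd, hmul⟩ := hmul
  obtain ⟨C, hC⟩ := exists_forall_le_mul_pow_mul_pow_mul hM hN hL.1 hLlc hc₁ hc₂ hd hmul
  obtain ⟨S, hS, hLS⟩ :=
    exists_one_le_forall_le_pow_mul hM hN hL.2.1 (by positivity) (by positivity) hC
  exact ⟨⟨S, fun j hj => div_convSeq_rpow_le hM.1 hN.1 hL.1 (zero_le_one.trans hS) hLS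
    (Nat.one_le_iff_ne_zero.1 hj)⟩, S, hS, hLS⟩

/-- Proposition: for log-convex weight sequences `M`, `N`, `L`: (i) if the
pointwise product maps `H^∞_{v_{M,c₁}} × H^∞_{v_{N,c₂}}` into `H^∞_{v_{L,d}}`
for some `c₁, c₂, d > 0`, then `L ≼ M⋆N`; (ii) if this holds with
`M = N = L`, then `M` has (mg). -/
theorem stmt18 (M N L : ℕ → ℝ) (hM : WeightSeq M) (hMlc : LogConvexSeq M)
    (hN : WeightSeq N) (hNlc : LogConvexSeq N)
    (hL : WeightSeq L) (hLlc : LogConvexSeq L) :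
    ((∃ c₁ : ℝ, 0 < c₁ ∧ ∃ c₂ : ℝ, 0 < c₂ ∧ ∃ d : ℝ, 0 < d ∧
        ∀ f g : ℂ → ℂ, f ∈ Hinf (vMc M c₁) → g ∈ Hinf (vMc N c₂) →
          (fun z : ℂ => f z * g z) ∈ Hinf (vMc L d)) →
      ∃ S : ℝ, ∀ j : ℕ, 1 ≤ j → (L j / convSeq M N j) ^ (1 / (j : ℝ)) ≤ S) ∧
    ((∃ c₁ : ℝ, 0 < c₁ ∧ ∃ c₂ : ℝ, 0 < c₂ ∧ ∃ d : ℝ, 0 < d ∧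
        ∀ f g : ℂ → ℂ, f ∈ Hinf (vMc M c₁) → g ∈ Hinf (vMc M c₂) →
          (fun z : ℂ => f z * g z) ∈ Hinf (vMc M d)) →
      MGseq M) :=
  ⟨fun hmul => (stmt18_general hM hN hL hLlc hmul).1,
    fun hmul => (stmt18_general hM hM hM hMlc hmul).2⟩
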